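/- arXiv:1703.05057 — 2 statements merged into one kernel-verified Lean document; each statement's English description precedes it below -/
import Mathlib

section
/- If a stepset polynomial has the (1,2)-Hadamard form P(x,y,z) = U(x) + V(x)·T(y,z) with V ≠ 0 and T having nonzero coefficients at y^{-1}-terms and y-terms (so that the group maps are defined), then the birational involutions φ_x, φ_y, φ_z associated to P satisfy φ_x∘φ_y = φ_y∘φ_x and φ_x∘φ_z = φ_z∘φ_x. -/
open MvPolynomial

noncomputable section

/-- The field `ℚ(x,y,z)` of rational functions in three variables. -/
abbrev Fld : Type := FractionRing (MvPolynomial (Fin 3) ℚ)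

/-- The variables `x = Xv 0`, `y = Xv 1`, `z = Xv 2` of `ℚ(x,y,z)`. -/
def Xv (i : Fin 3) : Fld := algebraMap (MvPolynomial (Fin 3) ℚ) Fld (X i)

/-- The value at `(a,b)` of the bivariate Laurent polynomial `p/(s^m t^n)`. -/
def lv (p : MvPolynomial (Fin 2) ℚ) (m n : ℕ) (a b : Fld) : Fld :=
  aeval ![a, b] p / (a ^ m * b ^ n)

/-- The value at `a` of the univariate Laurent polynomial `p/s^m`. -/
def lv1 (p : Polynomial ℚ) (m : ℕ) (a : Fld) : Fld :=
  Polynomial.aeval a p / a ^ m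

/-- The value at `(a,b)` of the ratio of two bivariate Laurent polynomials. -/
def lratio (p : MvPolynomial (Fin 2) ℚ) (mp np : ℕ) (q : MvPolynomial (Fin 2) ℚ)
    (mq nq : ℕ) (a b : Fld) : Fld :=
  lv p mp np a b / lv q mq nq a b

/-!
An identity between Laurent polynomials holds at every point with nonzero coordinates as soon as it
holds at the generic point `(x, y, z)`; so `U(a) + V(a) T(b, c)` has the three expansions in `A`, `B`
and `C` for all nonzero `a`, `b`, `c`. The extreme coefficients of such an expansion are determined
by the function. Hence `A₋` and `A₊` depend on `(y, z)` only through `T(y, z)`, while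
`B₋ = V(x) T₋(z)` and `B₊ = V(x) T₊(z)`, so that `B₋ / B₊` takes the same value at any two `x` where
`V` does not vanish; `x⁻¹ A₋ / A₊` is such a point, being transcendental over `ℚ`. Finally `φ_y`
fixes `P`, hence `T`, because it exchanges the two outer terms of `y⁻¹ B₋ + B₀ + y B₊`. The same
holds for `z`.
-/

section Aeval

theorem mvPolynomial_aeval_pi_apply {R A ι σ : Type*} [CommSemiring R] [CommSemiring A]
    [Algebra R A] (f : σ → ι → A) (p : MvPolynomial σ R) (i : ι) :
    aeval f p i = aeval (fun s ↦ f s i) p :=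
  comp_aeval_apply f (Pi.evalAlgHom R (fun _ ↦ A) i) p

variable {R A : Type*} [CommSemiring R] [CommSemiring A] [Algebra R A] {S : Subalgebra R A}

theorem polynomial_aeval_mem {a : A} (ha : a ∈ S) (p : Polynomial R) :
    Polynomial.aeval a p ∈ S :=
  Algebra.adjoin_le (Set.singleton_subset_iff.2 ha) (Polynomial.aeval_mem_adjoin_singleton R a)

theorem mvPolynomial_aeval_mem {σ : Type*} {f : σ → A} (hf : ∀ i, f i ∈ S)
    (p : MvPolynomial σ R) : aeval f p ∈ S := by
  lift f to σ → S using hf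
  exact S.mvPolynomial_aeval_coe f p ▸ Subtype.coe_prop _

end Aeval

section LaurentFunctions

variable (k K σ : Type*) [CommRing k] [CommRing K] [Algebra k K]

/-- The `K`-valued functions on the torus `(Kˣ)^σ` given by Laurent polynomials over `k`. Working
with functions on the torus makes it possible to specialize a Laurent polynomial identity at any
point with invertible coordinates. -/
def laurentFunctions : Subalgebra k ((σ → Kˣ) → K) :=
  Algebra.adjoin k (Set.range (fun (i : σ) v ↦ (v i : K)) ∪
    Set.range (fun (i : σ) v ↦ ((v i)⁻¹ : Kˣ)))

variable {k K σ}

theorem coord_mem_laurentFunctions (i : σ) :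
    (fun v : σ → Kˣ ↦ (v i : K)) ∈ laurentFunctions k K σ :=
  Algebra.subset_adjoin (.inl ⟨i, rfl⟩)

theorem coord_inv_mem_laurentFunctions (i : σ) :
    (fun v : σ → Kˣ ↦ (((v i)⁻¹ : Kˣ) : K)) ∈ laurentFunctions k K σ :=
  Algebra.subset_adjoin (.inr ⟨i, rfl⟩)

theorem isUnit_aeval_monomial_one (v : σ → Kˣ) (m : σ →₀ ℕ) :
    IsUnit (aeval (fun i ↦ (v i : K)) (monomial m (1 : k))) := by
  rw [aeval_monomial, map_one, one_mul]
  exact IsUnit.prod_iff.2 fun i _ ↦ (v i).isUnit.pow _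

theorem exists_mul_monomial_eq_aeval {f : (σ → Kˣ) → K} (hf : f ∈ laurentFunctions k K σ) :
    ∃ (N : MvPolynomial σ k) (m : σ →₀ ℕ), ∀ v : σ → Kˣ,
      f v * aeval (fun i ↦ (v i : K)) (monomial m (1 : k)) = aeval (fun i ↦ (v i : K)) N := by
  induction hf using Algebra.adjoin_induction with
  | mem f hf =>
    obtain ⟨i, rfl⟩ | ⟨i, rfl⟩ := hf
    · exact ⟨X i, 0, fun v ↦ by simp⟩
    · exact ⟨1, Finsupp.single i 1, fun v ↦ by simp [aeval_monomial]⟩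
  | algebraMap r => exact ⟨C r, 0, fun v ↦ by simp⟩
  | add f g _ _ hf hg =>
    obtain ⟨N, m, hN⟩ := hf
    obtain ⟨M, n, hM⟩ := hg
    refine ⟨N * monomial n 1 + M * monomial m 1, m + n, fun v ↦ ?_⟩
    rw [← one_mul (1 : k), ← monomial_mul, one_mul]
    simp only [Pi.add_apply, map_add, map_mul, ← hN v, ← hM v]
    ring
  | mul f g _ _ hf hg =>
    obtain ⟨N, m, hN⟩ := hf
    obtain ⟨M, n, hM⟩ := hg
    refine ⟨N * M, m + n, fun v ↦ ?_⟩
    rw [← one_mul (1 : k), ← monomial_mul]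
    simp only [Pi.mul_apply, map_mul, ← hN v, ← hM v]
    ring

theorem eq_of_mem_laurentFunctions_of_algebraicIndependent {f g : (σ → Kˣ) → K}
    (hf : f ∈ laurentFunctions k K σ) (hg : g ∈ laurentFunctions k K σ) {x : σ → Kˣ}
    (hx : AlgebraicIndependent k fun i ↦ (x i : K)) (h : f x = g x) : f = g := by
  obtain ⟨N, m, hN⟩ := exists_mul_monomial_eq_aeval (sub_mem hf hg)
  have hN0 : N = 0 := hx.eq_zero_of_aeval_eq_zero N (by rw [← hN, Pi.sub_apply, h]; simp)
  funext v
  have hv := hN v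
  rw [hN0, map_zero, (isUnit_aeval_monomial_one v m).mul_left_eq_zero] at hv
  exact sub_eq_zero.1 hv

end LaurentFunctions

section SmallSteps

variable {K : Type*} [Field K]

/-- `f(a) = a⁻¹ m + o + a p` for all `a ≠ 0`: the expansion of a stepset polynomial in one of its
variables, with the remaining variables held fixed. -/
def HasSmallStepExpansion (f : Kˣ → K) (m o p : K) : Prop :=
  ∀ a : Kˣ, f a = (a : K)⁻¹ * m + o + a * p

namespace HasSmallStepExpansion

variable {f : Kˣ → K} {m o p m' o' p' : K}

theorem apply_reflect (h : HasSmallStepExpansion f m o p) {a a' : Kˣ}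
    (ha' : (a' : K) = (a : K)⁻¹ * (m / p)) : f a' = f a := by
  have hm : m ≠ 0 := by rintro rfl; simp at ha'
  have hp : p ≠ 0 := by rintro rfl; simp at ha'
  rw [h, h, ha']
  field_simp
  ring

theorem of_add_mul {u v : K} {t : Kˣ → K}
    (h : HasSmallStepExpansion (fun a ↦ u + v * t a) m o p) (hv : v ≠ 0) :
    HasSmallStepExpansion t (m / v) ((o - u) / v) (p / v) := fun a ↦ by
  have ha := h a
  field_simp at ha ⊢
  linear_combination ha

variable [Infinite K]

theorem outer_unique (h : HasSmallStepExpansion f m o p) (h' : HasSmallStepExpansion f m' o' p') :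
    m = m' ∧ p = p' := by
  let q (m o p : K) : Polynomial K := .C m + .C o * .X + .C p * .X ^ 2
  have hq : q m o p = q m' o' p' := by
    refine Polynomial.eq_of_infinite_eval_eq _ _
      ((Set.finite_singleton (0 : K)).infinite_compl.mono fun a (ha : a ≠ 0) ↦ ?_)
    have haa := (h (Units.mk0 a ha)).symm.trans (h' (Units.mk0 a ha))
    simp only [Units.val_mk0] at haa
    field_simp at haa
    simp only [q, Set.mem_ofPred_eq, Polynomial.eval_add, Polynomial.eval_mul, Polynomial.eval_pow,
      Polynomial.eval_C, Polynomial.eval_X]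
    linear_combination haa
  constructor
  · simpa [q] using congrArg (Polynomial.coeff · 0) hq
  · simpa [q, Polynomial.coeff_X, Polynomial.coeff_C] using congrArg (Polynomial.coeff · 2) hq

theorem div_unique (h : HasSmallStepExpansion f m o p) (h' : HasSmallStepExpansion f m' o' p') :
    m / p = m' / p' := by
  obtain ⟨rfl, rfl⟩ := h.outer_unique h'
  rfl

theorem div_eq_of_add_mul {u v u' v' : K} {t : Kˣ → K}
    (h : HasSmallStepExpansion (fun b ↦ u + v * t b) m o p)
    (h' : HasSmallStepExpansion (fun b ↦ u' + v' * t b) m' o' p') (hv : v ≠ 0) (hv' : v' ≠ 0) :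
    m / p = m' / p' := by
  have hdiv := (h.of_add_mul hv).div_unique (h'.of_add_mul hv')
  rwa [div_div_div_cancel_right₀ hv, div_div_div_cancel_right₀ hv'] at hdiv

end HasSmallStepExpansion

theorem div_eq_div_of_reflect [Infinite K] {u v t m o p : Kˣ → K} {m' o' p' : K}
    (hx : ∀ b, HasSmallStepExpansion (fun a ↦ u a + v a * t b) (m b) (o b) (p b)) {a b b' : Kˣ}
    (hy : HasSmallStepExpansion (fun b ↦ u a + v a * t b) m' o' p')
    (hb' : (b' : K) = (b : K)⁻¹ * (m' / p')) (hv : v a ≠ 0) : m b / p b = m b' / p b' := by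
  have ht : t b' = t b := mul_left_cancel₀ hv (add_left_cancel (hy.apply_reflect hb'))
  have hxb' := hx b'
  rw [ht] at hxb'
  exact (hx b).div_unique hxb'

end SmallSteps

theorem transcendental_inv_mul {k K : Type*} [Field k] [Field K] [Algebra k K]
    {E : IntermediateField k K} {x r : K} (hx : Transcendental E x) (hr : r ∈ E) (hr0 : r ≠ 0) :
    Transcendental k (x⁻¹ * r) := fun halg ↦ by
  have hrE : IsAlgebraic E r := isAlgebraic_algebraMap (⟨r, hr⟩ : E)
  have hmul : IsAlgebraic E (r * (x⁻¹ * r)⁻¹) := hrE.mul (halg.tower_top E).inv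
  rw [mul_inv, inv_inv, mul_left_comm, mul_inv_cancel₀ hr0, mul_one] at hmul
  exact hx hmul

theorem algebraicIndependent_Xv : AlgebraicIndependent ℚ Xv :=
  (algebraicIndependent_X (Fin 3) ℚ).map' (f := IsScalarTower.toAlgHom ℚ _ Fld)
    (IsFractionRing.injective _ Fld)

theorem Xv_ne_zero (i : Fin 3) : Xv i ≠ 0 := algebraicIndependent_Xv.ne_zero i

/-- The generic point `(x, y, z)` of the torus. -/
def genericUnit (i : Fin 3) : Fldˣ := Units.mk0 (Xv i) (Xv_ne_zero i)

section Evaluation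

theorem lv1_ne_zero_of_transcendental {V : Polynomial ℚ} (hV : V ≠ 0) (m : ℕ) {a : Fld}
    (ha : Transcendental ℚ a) : lv1 V m a ≠ 0 :=
  div_ne_zero (fun h ↦ ha ⟨V, hV, h⟩) (pow_ne_zero m fun h ↦ ha (h ▸ isAlgebraic_zero))

theorem lv_mem {E : IntermediateField ℚ Fld} {a b : Fld} (ha : a ∈ E) (hb : b ∈ E)
    (p : MvPolynomial (Fin 2) ℚ) (m n : ℕ) : lv p m n a b ∈ E :=
  div_mem (mvPolynomial_aeval_mem (S := E.toSubalgebra) (Fin.forall_fin_two.2 ⟨ha, hb⟩) p)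
    (mul_mem (pow_mem ha m) (pow_mem hb n))

theorem transcendental_inv_mul_lratio {p q : MvPolynomial (Fin 2) ℚ} {mp np mq nq : ℕ}
    (h : lratio p mp np q mq nq (Xv 1) (Xv 2) ≠ 0) :
    Transcendental ℚ ((Xv 0)⁻¹ * lratio p mp np q mq nq (Xv 1) (Xv 2)) := by
  have hx : Transcendental (IntermediateField.adjoin ℚ (Xv '' {1, 2})) (Xv 0) :=
    IntermediateField.transcendental_adjoin_iff.2
      (algebraicIndependent_Xv.transcendental_adjoin (by simp))
  have hy := IntermediateField.subset_adjoin ℚ (Xv '' {1, 2}) ⟨1, by simp, rfl⟩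
  have hz := IntermediateField.subset_adjoin ℚ (Xv '' {1, 2}) ⟨2, by simp, rfl⟩
  exact transcendental_inv_mul hx (div_mem (lv_mem hy hz _ _ _) (lv_mem hy hz _ _ _)) h

variable {σ : Type*}

theorem lv1_mem_laurentFunctions (p : Polynomial ℚ) (m : ℕ) (i : σ) :
    (fun v : σ → Fldˣ ↦ lv1 p m (v i)) ∈ laurentFunctions ℚ Fld σ := by
  have hmem := mul_mem (polynomial_aeval_mem (coord_mem_laurentFunctions i) p)
    (pow_mem (coord_inv_mem_laurentFunctions (k := ℚ) (K := Fld) i) m)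
  convert hmem using 1
  funext v
  simp [lv1, div_eq_mul_inv, Polynomial.aeval_pi_apply]

theorem lv_mem_laurentFunctions (p : MvPolynomial (Fin 2) ℚ) (m n : ℕ) (i j : σ) :
    (fun v : σ → Fldˣ ↦ lv p m n (v i) (v j)) ∈ laurentFunctions ℚ Fld σ := by
  have hmem := mul_mem (mvPolynomial_aeval_mem
      (f := ![fun v : σ → Fldˣ ↦ (v i : Fld), fun v ↦ (v j : Fld)]) (Fin.forall_fin_two.2
        ⟨coord_mem_laurentFunctions i, coord_mem_laurentFunctions j⟩) p)
    (mul_mem (pow_mem (coord_inv_mem_laurentFunctions (k := ℚ) (K := Fld) i) m)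
      (pow_mem (coord_inv_mem_laurentFunctions j) n))
  convert hmem using 1
  funext v
  have heval : aeval ![(v i : Fld), v j] p =
      aeval ![fun v : σ → Fldˣ ↦ (v i : Fld), fun v ↦ (v j : Fld)] p v := by
    rw [mvPolynomial_aeval_pi_apply]
    congr 2 with t
    fin_cases t <;> rfl
  simp [lv, div_eq_mul_inv, heval, mul_comm]

end Evaluation

theorem hadamard_expansion {U V : Polynomial ℚ} {T q r s : MvPolynomial (Fin 2) ℚ}
    {mU mV mT nT mq nq mr nr ms ns : ℕ} {i j l : Fin 3}
    (h : lv1 U mU (Xv 0) + lv1 V mV (Xv 0) * lv T mT nT (Xv 1) (Xv 2) =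
      (Xv i)⁻¹ * lv q mq nq (Xv j) (Xv l) + lv r mr nr (Xv j) (Xv l) +
        Xv i * lv s ms ns (Xv j) (Xv l))
    (v : Fin 3 → Fldˣ) :
    lv1 U mU (v 0) + lv1 V mV (v 0) * lv T mT nT (v 1) (v 2) =
      (v i : Fld)⁻¹ * lv q mq nq (v j) (v l) + lv r mr nr (v j) (v l) +
        v i * lv s ms ns (v j) (v l) := by
  have hleft := add_mem (lv1_mem_laurentFunctions U mU (0 : Fin 3))
    (mul_mem (lv1_mem_laurentFunctions V mV 0) (lv_mem_laurentFunctions T mT nT 1 2))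
  have hright := add_mem (add_mem
      (mul_mem (coord_inv_mem_laurentFunctions i) (lv_mem_laurentFunctions q mq nq j l))
      (lv_mem_laurentFunctions r mr nr j l))
    (mul_mem (coord_mem_laurentFunctions i) (lv_mem_laurentFunctions s ms ns j l))
  have heq := eq_of_mem_laurentFunctions_of_algebraicIndependent hleft hright
    (x := genericUnit) algebraicIndependent_Xv (by simpa [genericUnit] using h)
  simpa using congrFun heq v

/-- If a stepset polynomial `P(x,y,z) = x⁻¹A₋(y,z) + A₀(y,z) + xA₊(y,z)
= y⁻¹B₋(x,z) + B₀(x,z) + yB₊(x,z) = z⁻¹C₋(x,y) + C₀(x,y) + zC₊(x,y)` (all coefficient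
Laurent polynomials `A₋,A₊,B₋,B₊,C₋,C₊` nonzero, so that the group maps are defined)
has the (1,2)-Hadamard form `P = U(x) + V(x)·T(y,z)` with `V ≠ 0`, then
`φ_x∘φ_y = φ_y∘φ_x` and `φ_x∘φ_z = φ_z∘φ_x`; since `φ_x` only changes `x`, `φ_y` only `y`
and `φ_z` only `z`, commutation is expressed by the invariance of `A₋/A₊` under
`y ↦ (1/y)·B₋/B₊` and `z ↦ (1/z)·C₋/C₊`, of `B₋/B₊` under `x ↦ (1/x)·A₋/A₊`, and of
`C₋/C₊` under `x ↦ (1/x)·A₋/A₊`. -/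
theorem stmt1
    (aM aP a0 bM bP b0 cM cP c0 : MvPolynomial (Fin 2) ℚ)
    (aMy aMz aPy aPz a0y a0z bMx bMz bPx bPz b0x b0z cMx cMy cPx cPy c0x c0y : ℕ)
    (U V : Polynomial ℚ) (mU mV : ℕ) (T : MvPolynomial (Fin 2) ℚ) (mT nT : ℕ)
    (P : Fld)
    (hA : P = (Xv 0)⁻¹ * lv aM aMy aMz (Xv 1) (Xv 2) + lv a0 a0y a0z (Xv 1) (Xv 2)
            + Xv 0 * lv aP aPy aPz (Xv 1) (Xv 2))
    (hB : P = (Xv 1)⁻¹ * lv bM bMx bMz (Xv 0) (Xv 2) + lv b0 b0x b0z (Xv 0) (Xv 2)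
            + Xv 1 * lv bP bPx bPz (Xv 0) (Xv 2))
    (hC : P = (Xv 2)⁻¹ * lv cM cMx cMy (Xv 0) (Xv 1) + lv c0 c0x c0y (Xv 0) (Xv 1)
            + Xv 2 * lv cP cPx cPy (Xv 0) (Xv 1))
    (hAM : lv aM aMy aMz (Xv 1) (Xv 2) ≠ 0) (hAP : lv aP aPy aPz (Xv 1) (Xv 2) ≠ 0)
    (hBM : lv bM bMx bMz (Xv 0) (Xv 2) ≠ 0) (hBP : lv bP bPx bPz (Xv 0) (Xv 2) ≠ 0)
    (hCM : lv cM cMx cMy (Xv 0) (Xv 1) ≠ 0) (hCP : lv cP cPx cPy (Xv 0) (Xv 1) ≠ 0)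
    (hHad : P = lv1 U mU (Xv 0) + lv1 V mV (Xv 0) * lv T mT nT (Xv 1) (Xv 2))
    (hV : lv1 V mV (Xv 0) ≠ 0) :
    (lratio aM aMy aMz aP aPy aPz (Xv 1) (Xv 2) =
      lratio aM aMy aMz aP aPy aPz
        ((Xv 1)⁻¹ * lratio bM bMx bMz bP bPx bPz (Xv 0) (Xv 2)) (Xv 2)) ∧
    (lratio bM bMx bMz bP bPx bPz (Xv 0) (Xv 2) =
      lratio bM bMx bMz bP bPx bPz
        ((Xv 0)⁻¹ * lratio aM aMy aMz aP aPy aPz (Xv 1) (Xv 2)) (Xv 2)) ∧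
    (lratio aM aMy aMz aP aPy aPz (Xv 1) (Xv 2) =
      lratio aM aMy aMz aP aPy aPz (Xv 1)
        ((Xv 2)⁻¹ * lratio cM cMx cMy cP cPx cPy (Xv 0) (Xv 1))) ∧
    (lratio cM cMx cMy cP cPx cPy (Xv 0) (Xv 1) =
      lratio cM cMx cMy cP cPx cPy
        ((Xv 0)⁻¹ * lratio aM aMy aMz aP aPy aPz (Xv 1) (Xv 2)) (Xv 1)) := by
  have hA0 : lratio aM aMy aMz aP aPy aPz (Xv 1) (Xv 2) ≠ 0 := div_ne_zero hAM hAP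
  have hV0 : V ≠ 0 := by rintro rfl; simp [lv1] at hV
  have hVx' := lv1_ne_zero_of_transcendental hV0 mV (transcendental_inv_mul_lratio hA0)
  let x := genericUnit 0
  let y := genericUnit 1
  let z := genericUnit 2
  let x' := Units.mk0 _ (mul_ne_zero (inv_ne_zero (Xv_ne_zero 0)) hA0)
  let y' := Units.mk0 _ (mul_ne_zero (inv_ne_zero (Xv_ne_zero 1)) (div_ne_zero hBM hBP))
  let z' := Units.mk0 _ (mul_ne_zero (inv_ne_zero (Xv_ne_zero 2)) (div_ne_zero hCM hCP))
  have sA (b c : Fldˣ) : HasSmallStepExpansion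
      (fun a ↦ lv1 U mU a + lv1 V mV a * lv T mT nT b c)
      (lv aM aMy aMz b c) (lv a0 a0y a0z b c) (lv aP aPy aPz b c) :=
    fun a ↦ hadamard_expansion (hHad.symm.trans hA) ![a, b, c]
  have sB (a c : Fldˣ) : HasSmallStepExpansion
      (fun b ↦ lv1 U mU a + lv1 V mV a * lv T mT nT b c)
      (lv bM bMx bMz a c) (lv b0 b0x b0z a c) (lv bP bPx bPz a c) :=
    fun b ↦ hadamard_expansion (hHad.symm.trans hB) ![a, b, c]
  have sC (a b : Fldˣ) : HasSmallStepExpansion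
      (fun c ↦ lv1 U mU a + lv1 V mV a * lv T mT nT b c)
      (lv cM cMx cMy a b) (lv c0 c0x c0y a b) (lv cP cPx cPy a b) :=
    fun c ↦ hadamard_expansion (hHad.symm.trans hC) ![a, b, c]
  exact ⟨div_eq_div_of_reflect (b := y) (b' := y') (sA · z) (sB x z) rfl hV,
    (sB x z).div_eq_of_add_mul (sB x' z) hV hVx',
    div_eq_div_of_reflect (b := z) (b' := z') (sA y) (sC x y) rfl hV,
    (sC x y).div_eq_of_add_mul (sC x' y) hV hVx'⟩
end
end

section
/- Suppose B_-(x,z) = v₁(x)b_-(z), B_+(x,z) = v₁(x)b_+(z), C_-(x,y) = v₂(x)c_-(y), C_+(x,y) = v₂(x)c_+(y), all nonzero, and that the Laurent polynomial P satisfies P = B_0(x,z) + v₁(x)(b_-(z)y^{-1} + b_+(z)y) = C_0(x,y) + v₂(x)(c_-(y)z^{-1} + c_+(y)z), where B_0 does not involve y and C_0 does not involve z. If b_- /b_+ is not constant (so P contains a monomial involving both y and z), then v₁ and v₂ agree up to a nonzero scalar, and P can be written as u(x) + v(x)t(y,z) for Laurent polynomials u, v in x and t in y, z; i.e., P is (1,2)-Hadamard.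 -/
open MvPolynomial

noncomputable section

/-! Contract a tensor factor with a linear functional. Write `P = B₀ + v₁ r = C₀ + v₂ q` with
`r = b₋ y⁻¹ + b₊ y` and `q = c₋ z⁻¹ + c₊ z`. Contracting `y` with functionals that isolate the
coefficients of `y⁻¹` and `y` shows that `r` is not a sum `f(y) + g(z)`, as `b₋ / b₊` is not
constant. So some functional on the Laurent polynomials in `y, z` annihilates all such sums but not
`r`. Contracting `y, z` with it kills `B₀` and `C₀`, which leaves `v₁` proportional to `v₂`. Now
`B₀ - C₀` is `v₁` times a Laurent polynomial in `y, z`, and contracting `y` with a functional that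
takes the value `1` at `1` gives `B₀ = u(x) + v₁(x) s(z)`. -/

section LinearlyDisjoint

variable {k S : Type*} [Field k] [CommRing S] [Algebra k S] {X Y Z : Subalgebra k S}

/-- `P = u + v t` with `u, v ∈ X` and `t ∈ T`; the (1,2)-Hadamard polynomials are the case where
`X` consists of the Laurent polynomials in `x` and `T` of those in `y, z`. -/
def IsHadamard (X T : Subalgebra k S) (P : S) : Prop :=
  ∃ u ∈ X, ∃ v ∈ X, ∃ t ∈ T, P = u + v * t

theorem exists_contraction_of_linearDisjoint (h : X.LinearDisjoint Y) (φ : S →ₗ[k] k) :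
    ∃ Φ : S →ₗ[k] S, ∀ a ∈ X, ∀ b ∈ Y, Φ (a * b) = φ b • a := by
  obtain ⟨split, hsplit⟩ := (X.mulMap Y).toLinearMap.exists_leftInverse_of_injective
    (LinearMap.ker_eq_bot.2 h.injective)
  let contract : TensorProduct k X Y →ₗ[k] X :=
    TensorProduct.rid k X ∘ₗ (φ ∘ₗ Y.val.toLinearMap).lTensor X
  refine ⟨X.val.toLinearMap ∘ₗ contract ∘ₗ split, fun a ha b hb => ?_⟩
  have hab : split (a * b) = (⟨a, ha⟩ : X) ⊗ₜ[k] (⟨b, hb⟩ : Y) :=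
    LinearMap.congr_fun hsplit ((⟨a, ha⟩ : X) ⊗ₜ[k] (⟨b, hb⟩ : Y))
  simp [contract, hab]

theorem map_mem_of_mem_sup {M : Type*} [AddCommGroup M] [Module k M] {Φ : S →ₗ[k] M}
    {N : Submodule k M} (h : ∀ a ∈ X, ∀ b ∈ Y, Φ (a * b) ∈ N) {f : S} (hf : f ∈ X ⊔ Y) :
    Φ f ∈ N := by
  have hle : Subalgebra.toSubmodule (X ⊔ Y) ≤ N.comap Φ := by
    rw [← Subalgebra.mul_toSubmodule]
    exact Submodule.mul_le.2 h
  exact hle hf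

theorem exists_ne_zero_and_eq_algebraMap_mul_of_linearDisjoint (h : X.LinearDisjoint (Y ⊔ Z))
    {B₀ C₀ v₁ v₂ r q : S} (hB₀ : B₀ ∈ X ⊔ Z) (hC₀ : C₀ ∈ X ⊔ Y) (hv₁ : v₁ ∈ X) (hv₂ : v₂ ∈ X)
    (hr : r ∈ Y ⊔ Z) (hq : q ∈ Y ⊔ Z) (heq : B₀ + v₁ * r = C₀ + v₂ * q) (hv₁0 : v₁ ≠ 0)
    (hmixed : r ∉ Subalgebra.toSubmodule Y ⊔ Subalgebra.toSubmodule Z) :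
    ∃ c : k, c ≠ 0 ∧ v₂ = algebraMap k S c * v₁ := by
  obtain ⟨χ, hχr, hχ⟩ := Submodule.exists_le_ker_of_notMem hmixed
  obtain ⟨hχY, hχZ⟩ := sup_le_iff.1 hχ
  obtain ⟨Φ, hΦ⟩ := exists_contraction_of_linearDisjoint h χ
  have hΦB₀ : Φ B₀ = 0 := (Submodule.mem_bot k).1 <| map_mem_of_mem_sup
    (fun a ha z hz => by simp [hΦ a ha z (le_sup_right (a := Y) hz), LinearMap.mem_ker.1 (hχZ hz)])
    hB₀
  have hΦC₀ : Φ C₀ = 0 := (Submodule.mem_bot k).1 <| map_mem_of_mem_sup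
    (fun a ha y hy => by simp [hΦ a ha y (le_sup_left (b := Z) hy), LinearMap.mem_ker.1 (hχY hy)])
    hC₀
  have hprop : χ r • v₁ = χ q • v₂ := by
    simpa only [map_add, hΦB₀, hΦC₀, zero_add, hΦ v₁ hv₁ r hr, hΦ v₂ hv₂ q hq]
      using congrArg Φ heq
  have hχq : χ q ≠ 0 := fun h0 => smul_ne_zero hχr hv₁0 (by rw [hprop, h0, zero_smul])
  refine ⟨(χ q)⁻¹ * χ r, mul_ne_zero (inv_ne_zero hχq) hχr, ?_⟩
  rw [← Algebra.smul_def, mul_smul, hprop, inv_smul_smul₀ hχq]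

theorem exists_eq_add_mul_of_linearDisjoint [Nontrivial S] (h : (X ⊔ Z).LinearDisjoint Y)
    {B₀ C₀ v w : S} (hB₀ : B₀ ∈ X ⊔ Z) (hC₀ : C₀ ∈ X ⊔ Y) (hv : v ∈ X) (hw : w ∈ Y ⊔ Z)
    (heq : B₀ = C₀ + v * w) : ∃ u ∈ X, ∃ s ∈ Z, B₀ = u + v * s := by
  obtain ⟨φ, hφ⟩ := Module.Projective.exists_dual_eq_one k (one_ne_zero (α := S))
  obtain ⟨Φ, hΦ⟩ := exists_contraction_of_linearDisjoint h φ
  have hΦB₀ : Φ B₀ = B₀ := by simpa [hφ] using hΦ B₀ hB₀ 1 Y.one_mem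
  have hΦC₀ : Φ C₀ ∈ Subalgebra.toSubmodule X := map_mem_of_mem_sup
    (fun a ha y hy => hΦ a (le_sup_left (b := Z) ha) y hy ▸ X.smul_mem ha _) hC₀
  have hΦw : (Φ ∘ₗ LinearMap.mulLeft k v) w ∈
      (Subalgebra.toSubmodule Z).map (LinearMap.mulLeft k v) := by
    refine map_mem_of_mem_sup (fun z hz y hy => ?_) (sup_comm Y Z ▸ hw)
    have hvz : v * z ∈ X ⊔ Z := Algebra.mul_mem_sup hv hz
    refine ⟨φ y • z, Z.smul_mem hz _, ?_⟩
    simp [← mul_assoc, hΦ (v * z) hvz y hy]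
  obtain ⟨s, hs, hsw⟩ := hΦw
  refine ⟨Φ C₀, hΦC₀, s, hs, ?_⟩
  calc B₀ = Φ B₀ := hΦB₀.symm
    _ = Φ C₀ + Φ (v * w) := by rw [heq, map_add]
    _ = Φ C₀ + v * s := congrArg _ hsw.symm

theorem exists_ne_zero_and_isHadamard_of_linearDisjoint
    (hX : X.LinearDisjoint (Y ⊔ Z)) (hY : (X ⊔ Z).LinearDisjoint Y)
    {P B₀ C₀ v₁ v₂ r q : S} (hB₀ : B₀ ∈ X ⊔ Z) (hC₀ : C₀ ∈ X ⊔ Y) (hv₁ : v₁ ∈ X) (hv₂ : v₂ ∈ X)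
    (hr : r ∈ Y ⊔ Z) (hq : q ∈ Y ⊔ Z) (hv₁0 : v₁ ≠ 0)
    (hPB : P = B₀ + v₁ * r) (hPC : P = C₀ + v₂ * q)
    (hmixed : r ∉ Subalgebra.toSubmodule Y ⊔ Subalgebra.toSubmodule Z) :
    (∃ c : k, c ≠ 0 ∧ v₂ = algebraMap k S c * v₁) ∧ IsHadamard X (Y ⊔ Z) P := by
  have heq : B₀ + v₁ * r = C₀ + v₂ * q := hPB.symm.trans hPC
  obtain ⟨c, hc, hcv⟩ :=
    exists_ne_zero_and_eq_algebraMap_mul_of_linearDisjoint hX hB₀ hC₀ hv₁ hv₂ hr hq heq hv₁0 hmixed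
  have : Nontrivial S := nontrivial_of_ne v₁ 0 hv₁0
  obtain ⟨u, hu, s, hs, hB₀eq⟩ : ∃ u ∈ X, ∃ s ∈ Z, B₀ = u + v₁ * s :=
    exists_eq_add_mul_of_linearDisjoint hY hB₀ hC₀ hv₁
      (sub_mem (mul_mem (algebraMap_mem _ c) hq) hr) (by linear_combination heq + q * hcv)
  exact ⟨⟨c, hc, hcv⟩, u, hu, v₁, hv₁, s + r, add_mem (le_sup_right (a := Y) hs) hr,
    by rw [hPB, hB₀eq]; ring⟩

theorem mem_bot_of_mul_add_mul_mem_sup (h : Z.LinearDisjoint Y) {y₁ y₂ z₁ z₂ : S}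
    (hy₁ : y₁ ∈ Y) (hy₂ : y₂ ∈ Y) (hz₁ : z₁ ∈ Z) (hz₂ : z₂ ∈ Z)
    (hspan : y₁ ∉ Submodule.span k {1, y₂})
    (hmem : z₁ * y₁ + z₂ * y₂ ∈ Subalgebra.toSubmodule Y ⊔ Subalgebra.toSubmodule Z) :
    z₁ ∈ (⊥ : Subalgebra k S) := by
  obtain ⟨φ, hφy₁, hφ⟩ := Submodule.exists_le_ker_of_notMem hspan
  have hφ1 : φ 1 = 0 := hφ (Submodule.subset_span (by simp))
  have hφy₂ : φ y₂ = 0 := hφ (Submodule.subset_span (by simp))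
  obtain ⟨Φ, hΦ⟩ := exists_contraction_of_linearDisjoint h φ
  obtain ⟨f, hf, g, hg, hfg⟩ := Submodule.mem_sup.1 hmem
  have hΦf : Φ f = φ f • 1 := by simpa only [one_mul] using hΦ 1 Z.one_mem f hf
  have hΦg : Φ g = 0 := by simpa [hφ1] using hΦ g hg 1 Y.one_mem
  have hz₁eq : φ y₁ • z₁ = φ f • 1 := by
    simpa only [map_add, hΦf, hΦg, hΦ z₁ hz₁ y₁ hy₁, hΦ z₂ hz₂ y₂ hy₂, hφy₂, zero_smul, add_zero]
      using (congrArg Φ hfg).symm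
  rw [← inv_smul_smul₀ hφy₁ z₁, hz₁eq]
  exact Subalgebra.smul_mem _ (Subalgebra.smul_mem _ (one_mem _) _) _

end LinearlyDisjoint

section LinearDisjointAdjoin

variable {ι k L : Type*} [Field k]

theorem linearDisjoint_adjoin_of_algebraicIndependent [CommRing L] [Algebra k L] {x : ι → L}
    (hx : AlgebraicIndependent k x) {s t : Set ι} (hst : Disjoint s t) :
    (Algebra.adjoin k (x '' s)).LinearDisjoint (Algebra.adjoin k (x '' t)) := by
  have hxt : AlgebraicIndependent (Algebra.adjoin k (x '' s)) fun i : t => x i :=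
    hx.adjoin_of_disjoint hst
  have ht : Algebra.adjoin k (x '' t) = Algebra.adjoin k (Set.range fun i : t => x i) := by
    rw [Set.image_eq_range]
  rw [ht]
  let monomials :=
    (MvPolynomial.basisMonomials t k).map (hx.comp _ Subtype.val_injective).aevalEquiv.toLinearEquiv
  refine Subalgebra.LinearDisjoint.of_basis_right _ _ monomials ?_
  have hmonomials : (Algebra.adjoin k (Set.range fun i : t => x i)).val ∘ monomials =
      (aeval fun i : t => x i) ∘ MvPolynomial.basisMonomials t (Algebra.adjoin k (x '' s)) := by
    ext m
    simp [monomials, aeval_monomial]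
  rw [hmonomials]
  exact (MvPolynomial.basisMonomials t (Algebra.adjoin k (x '' s))).linearIndependent.map'
    (aeval fun i : t => x i).toLinearMap (LinearMap.ker_eq_bot.2 hxt)

variable [Field L] [Algebra k L]

open scoped IntermediateField.algebraAdjoinAdjoin in
theorem linearDisjoint_intermediateField_adjoin_left {s : Set L} {B : Subalgebra k L}
    (h : (Algebra.adjoin k s).LinearDisjoint B) :
    (IntermediateField.adjoin k s).toSubalgebra.LinearDisjoint B := by
  let b := Module.Free.chooseBasis k B
  have hb : LinearIndependent (Algebra.adjoin k s) (B.val ∘ b) :=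
    h.linearIndependent_right_of_flat b.linearIndependent
  exact .of_basis_right _ _ b
    ((LinearIndependent.iff_fractionRing _ (IntermediateField.adjoin k s)).1 hb)

theorem linearDisjoint_intermediateField_adjoin_of_algebraicIndependent {x : ι → L}
    (hx : AlgebraicIndependent k x) {s t : Set ι} (hst : Disjoint s t) :
    (IntermediateField.adjoin k (x '' s)).toSubalgebra.LinearDisjoint
      (IntermediateField.adjoin k (x '' t)).toSubalgebra :=
  (linearDisjoint_intermediateField_adjoin_left (linearDisjoint_intermediateField_adjoin_left
    (linearDisjoint_adjoin_of_algebraicIndependent hx hst)).symm).symm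

end LinearDisjointAdjoin

section LaurentAdjoin

open scoped Pointwise

variable {k L : Type*} [Field k] [Field L] [Algebra k L]

variable (k) in
/-- The algebra of Laurent polynomials in the elements of `s`, generated by these elements and
their inverses inside a field. -/
def laurentAdjoin (s : Set L) : Subalgebra k L :=
  Algebra.adjoin k (s ∪ s⁻¹)

theorem laurentAdjoin_union (s t : Set L) :
    laurentAdjoin k (s ∪ t) = laurentAdjoin k s ⊔ laurentAdjoin k t := by
  simp only [laurentAdjoin, ← Algebra.adjoin_union, Set.union_inv]
  rw [Set.union_union_union_comm]

theorem laurentAdjoin_pair (a b : L) :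
    laurentAdjoin k {a, b} = laurentAdjoin k {a} ⊔ laurentAdjoin k {b} :=
  laurentAdjoin_union {a} {b}

theorem self_mem_laurentAdjoin_singleton (a : L) : a ∈ laurentAdjoin k {a} :=
  Algebra.subset_adjoin (by simp)

theorem inv_mem_laurentAdjoin_singleton (a : L) : a⁻¹ ∈ laurentAdjoin k {a} :=
  Algebra.subset_adjoin (by simp)

theorem laurentAdjoin_le_intermediateField_adjoin (s : Set L) :
    laurentAdjoin k s ≤ (IntermediateField.adjoin k s).toSubalgebra := by
  refine Algebra.adjoin_le (Set.union_subset (IntermediateField.subset_adjoin k s) fun a ha => ?_)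
  have hmem : a ∈ IntermediateField.adjoin k s :=
    inv_mem_iff.1 (IntermediateField.subset_adjoin k s ha)
  exact hmem

theorem linearDisjoint_laurentAdjoin {ι : Type*} {x : ι → L} (hx : AlgebraicIndependent k x)
    {s t : Set ι} (hst : Disjoint s t) :
    (laurentAdjoin k (x '' s)).LinearDisjoint (laurentAdjoin k (x '' t)) :=
  (linearDisjoint_intermediateField_adjoin_of_algebraicIndependent hx hst).of_le_of_flat_right
    (laurentAdjoin_le_intermediateField_adjoin _) (laurentAdjoin_le_intermediateField_adjoin _)

theorem inv_mem_laurentAdjoin_of_mem_closure {s : Set L} {d : L} (hd : d ∈ Submonoid.closure s) :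
    d⁻¹ ∈ laurentAdjoin k s := by
  induction hd using Submonoid.closure_induction with
  | mem a ha => exact Algebra.subset_adjoin (Or.inr (Set.inv_mem_inv.2 ha))
  | one => simp
  | mul a b _ _ ha hb => exact mul_inv a b ▸ mul_mem ha hb

theorem mem_laurentAdjoin_iff {s : Set L} (hs : 0 ∉ s) {f : L} :
    f ∈ laurentAdjoin k s ↔
      ∃ p ∈ Algebra.adjoin k s, ∃ d ∈ Submonoid.closure s, f = p / d := by
  have hne {d : L} (hd : d ∈ Submonoid.closure s) : d ≠ 0 := by
    induction hd using Submonoid.closure_induction with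
    | mem a ha => exact fun h => hs (h ▸ ha)
    | one => exact one_ne_zero
    | mul a b _ _ ha hb => exact mul_ne_zero ha hb
  have hsub : Submonoid.closure s ≤ (Algebra.adjoin k s).toSubmonoid :=
    Submonoid.closure_le.2 Algebra.subset_adjoin
  constructor
  · intro hf
    induction hf using Algebra.adjoin_induction with
    | mem a ha =>
      rcases ha with ha | ha
      · exact ⟨a, Algebra.subset_adjoin ha, 1, one_mem _, (div_one a).symm⟩
      · exact ⟨1, one_mem _, a⁻¹, Submonoid.subset_closure ha, by simp⟩
    | algebraMap c => exact ⟨_, algebraMap_mem _ c, 1, one_mem _, (div_one _).symm⟩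
    | add _ _ _ _ hf hg =>
      obtain ⟨p, hp, d, hd, rfl⟩ := hf
      obtain ⟨q, hq, e, he, rfl⟩ := hg
      exact ⟨p * e + d * q, add_mem (mul_mem hp (hsub he)) (mul_mem (hsub hd) hq), d * e,
        mul_mem hd he, div_add_div p q (hne hd) (hne he)⟩
    | mul _ _ _ _ hf hg =>
      obtain ⟨p, hp, d, hd, rfl⟩ := hf
      obtain ⟨q, hq, e, he, rfl⟩ := hg
      exact ⟨p * q, mul_mem hp hq, d * e, mul_mem hd he, div_mul_div_comm p d q e⟩
  · rintro ⟨p, hp, d, hd, rfl⟩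
    rw [div_eq_mul_inv]
    exact mul_mem (Algebra.adjoin_mono Set.subset_union_left hp)
      (inv_mem_laurentAdjoin_of_mem_closure hd)

end LaurentAdjoin

section Transcendental

variable {k L : Type*} [Field k] [Field L] [Algebra k L] {y : L}

theorem inv_notMem_span_one_self (hy : Transcendental k y) : y⁻¹ ∉ Submodule.span k {1, y} := by
  intro hmem
  obtain ⟨a, b, hab⟩ := Submodule.mem_span_pair.1 hmem
  have hy0 : y ≠ 0 := fun h => hy (h ▸ isAlgebraic_zero)
  let p : Polynomial k := .C b * .X ^ 2 + .C a * .X - 1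
  have hp : Polynomial.aeval y p = 0 := by
    have h : (a • 1 + b • y) * y = 1 := by rw [hab, inv_mul_cancel₀ hy0]
    simp only [Algebra.smul_def] at h
    simp only [p, map_sub, map_add, map_mul, map_pow, Polynomial.aeval_C, Polynomial.aeval_X,
      map_one]
    linear_combination h
  have hcoeff : p.coeff 0 = 0 := by
    rw [(transcendental_iff.1 hy) p hp, Polynomial.coeff_zero]
  simp [p] at hcoeff

theorem self_notMem_span_one_inv (hy : Transcendental k y) : y ∉ Submodule.span k {1, y⁻¹} := by
  have hinv : Transcendental k y⁻¹ := fun h => hy (inv_inv y ▸ h.inv)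
  simpa only [inv_inv] using inv_notMem_span_one_self hinv

theorem mul_inv_add_mul_notMem_sup {Y Z : Subalgebra k L} (h : Z.LinearDisjoint Y)
    (hy : Transcendental k y) (hyY : y ∈ Y) (hyY' : y⁻¹ ∈ Y) {b₁ b₂ : L} (hb₁ : b₁ ∈ Z)
    (hb₂ : b₂ ∈ Z) (hconst : ¬∃ c : k, b₁ / b₂ = algebraMap k L c) :
    b₁ * y⁻¹ + b₂ * y ∉ Subalgebra.toSubmodule Y ⊔ Subalgebra.toSubmodule Z := by
  intro hmem
  obtain ⟨c₁, rfl⟩ := Algebra.mem_bot.1 <|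
    mem_bot_of_mul_add_mul_mem_sup h hyY' hyY hb₁ hb₂ (inv_notMem_span_one_self hy) hmem
  obtain ⟨c₂, rfl⟩ := Algebra.mem_bot.1 <|
    mem_bot_of_mul_add_mul_mem_sup h hyY hyY' hb₂ hb₁ (self_notMem_span_one_inv hy)
      (by rwa [add_comm])
  exact hconst ⟨c₁ / c₂, (map_div₀ _ _ _).symm⟩

end Transcendental

section AlgebraicallyIndependent

variable {k L : Type*} [Field k] [Field L] [Algebra k L]

theorem linearDisjoint_laurentAdjoin_singleton_pair {ι : Type*} {x : ι → L}
    (hx : AlgebraicIndependent k x) {i j l : ι} (hij : i ≠ j) (hil : i ≠ l) :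
    (laurentAdjoin k {x i}).LinearDisjoint (laurentAdjoin k {x j, x l}) := by
  simpa only [Set.image_singleton, Set.image_pair] using
    linearDisjoint_laurentAdjoin hx (s := {i}) (t := {j, l}) (by simp [hij, hil])

theorem mul_inv_add_mul_mem_laurentAdjoin_pair {y z b₁ b₂ : L} (hb₁ : b₁ ∈ laurentAdjoin k {z})
    (hb₂ : b₂ ∈ laurentAdjoin k {z}) : b₁ * y⁻¹ + b₂ * y ∈ laurentAdjoin k {z, y} := by
  rw [laurentAdjoin_pair]
  exact add_mem (Algebra.mul_mem_sup hb₁ (inv_mem_laurentAdjoin_singleton y))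
    (Algebra.mul_mem_sup hb₂ (self_mem_laurentAdjoin_singleton y))

theorem stmt13_general {x : Fin 3 → L} (hx : AlgebraicIndependent k x)
    {P B₀ C₀ v₁ v₂ b₁ b₂ c₁ c₂ : L}
    (hB₀ : B₀ ∈ laurentAdjoin k {x 0, x 2}) (hC₀ : C₀ ∈ laurentAdjoin k {x 0, x 1})
    (hv₁ : v₁ ∈ laurentAdjoin k {x 0}) (hv₂ : v₂ ∈ laurentAdjoin k {x 0})
    (hb₁ : b₁ ∈ laurentAdjoin k {x 2}) (hb₂ : b₂ ∈ laurentAdjoin k {x 2})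
    (hc₁ : c₁ ∈ laurentAdjoin k {x 1}) (hc₂ : c₂ ∈ laurentAdjoin k {x 1}) (hv₁0 : v₁ ≠ 0)
    (hPB : P = B₀ + v₁ * (b₁ * (x 1)⁻¹ + b₂ * x 1))
    (hPC : P = C₀ + v₂ * (c₁ * (x 2)⁻¹ + c₂ * x 2))
    (hconst : ¬∃ c : k, b₁ / b₂ = algebraMap k L c) :
    (∃ c : k, c ≠ 0 ∧ v₂ = algebraMap k L c * v₁) ∧
      IsHadamard (laurentAdjoin k {x 0}) (laurentAdjoin k {x 1, x 2}) P := by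
  have hx_yz : (laurentAdjoin k {x 0}).LinearDisjoint (laurentAdjoin k {x 1, x 2}) :=
    linearDisjoint_laurentAdjoin_singleton_pair hx (by decide) (by decide)
  have hy_xz : (laurentAdjoin k {x 1}).LinearDisjoint (laurentAdjoin k {x 0, x 2}) :=
    linearDisjoint_laurentAdjoin_singleton_pair hx (by decide) (by decide)
  have hr := mul_inv_add_mul_mem_laurentAdjoin_pair (y := x 1) hb₁ hb₂
  have hq := mul_inv_add_mul_mem_laurentAdjoin_pair (y := x 2) hc₁ hc₂
  rw [Set.pair_comm] at hr
  simp only [laurentAdjoin_pair] at *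
  have hmixed := mul_inv_add_mul_notMem_sup (hy_xz.of_le_right_of_flat le_sup_right).symm
    (hx.transcendental 1) (self_mem_laurentAdjoin_singleton _) (inv_mem_laurentAdjoin_singleton _)
    hb₁ hb₂ hconst
  exact exists_ne_zero_and_isHadamard_of_linearDisjoint hx_yz hy_xz.symm hB₀ hC₀ hv₁ hv₂ hr hq
    hv₁0 hPB hPC hmixed

end AlgebraicallyIndependent

section RationalFunctions

theorem mem_laurentAdjoin_Xv_iff {i : Fin 3} {f : Fld} :
    f ∈ laurentAdjoin ℚ {Xv i} ↔ ∃ p m, f = lv1 p m (Xv i) := by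
  have hi : (0 : Fld) ∉ ({Xv i} : Set Fld) := (algebraicIndependent_Xv.ne_zero i).symm
  simp [mem_laurentAdjoin_iff hi, Submonoid.mem_closure_singleton,
    Algebra.adjoin_singleton_eq_range_aeval, lv1]

theorem mem_laurentAdjoin_Xv_pair_iff {i j : Fin 3} {f : Fld} :
    f ∈ laurentAdjoin ℚ {Xv i, Xv j} ↔ ∃ p m n, f = lv p m n (Xv i) (Xv j) := by
  have hij : (0 : Fld) ∉ ({Xv i, Xv j} : Set Fld) := by
    simp [(algebraicIndependent_Xv.ne_zero _).symm]
  have hadjoin : Algebra.adjoin ℚ {Xv i, Xv j} = (aeval (R := ℚ) ![Xv i, Xv j]).range := by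
    rw [← Algebra.adjoin_range_eq_range_aeval, Matrix.range_cons_cons_empty]
  simp [mem_laurentAdjoin_iff hij, Submonoid.mem_closure_pair, hadjoin, lv]

theorem isHadamard_laurentAdjoin_Xv_iff {P : Fld} :
    IsHadamard (laurentAdjoin ℚ {Xv 0}) (laurentAdjoin ℚ {Xv 1, Xv 2}) P ↔
      ∃ (u v : Polynomial ℚ) (mu mv : ℕ) (t : MvPolynomial (Fin 2) ℚ) (mt nt : ℕ),
        P = lv1 u mu (Xv 0) + lv1 v mv (Xv 0) * lv t mt nt (Xv 1) (Xv 2) := by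
  simp only [IsHadamard, mem_laurentAdjoin_Xv_iff, mem_laurentAdjoin_Xv_pair_iff]
  constructor
  · rintro ⟨_, ⟨u, mu, rfl⟩, _, ⟨v, mv, rfl⟩, _, ⟨t, mt, nt, rfl⟩, hP⟩
    exact ⟨u, v, mu, mv, t, mt, nt, hP⟩
  · rintro ⟨u, v, mu, mv, t, mt, nt, hP⟩
    exact ⟨_, ⟨u, mu, rfl⟩, _, ⟨v, mv, rfl⟩, _, ⟨t, mt, nt, rfl⟩, hP⟩

end RationalFunctions

/-- Suppose `B₋ = v₁(x)b₋(z)`, `B₊ = v₁(x)b₊(z)`, `C₋ = v₂(x)c₋(y)`, `C₊ = v₂(x)c₊(y)`,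
all nonzero, and the Laurent polynomial `P` satisfies
`P = B₀(x,z) + v₁(x)(b₋(z)y⁻¹ + b₊(z)y) = C₀(x,y) + v₂(x)(c₋(y)z⁻¹ + c₊(y)z)`.
If `b₋/b₊` is not constant, then `v₁` and `v₂` agree up to a nonzero rational scalar and
`P = u(x) + v(x)·t(y,z)` for Laurent polynomials `u, v, t`, i.e. `P` is (1,2)-Hadamard. -/
theorem stmt13
    (v1 v2 bm bp cm cp : Polynomial ℚ) (m1 m2 mbm mbp mcm mcp : ℕ)
    (B0 C0 : MvPolynomial (Fin 2) ℚ) (b0x b0z c0x c0y : ℕ)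
    (P : Fld)
    (hv1 : lv1 v1 m1 (Xv 0) ≠ 0) (hv2 : lv1 v2 m2 (Xv 0) ≠ 0)
    (hbm : lv1 bm mbm (Xv 2) ≠ 0) (hbp : lv1 bp mbp (Xv 2) ≠ 0)
    (hcm : lv1 cm mcm (Xv 1) ≠ 0) (hcp : lv1 cp mcp (Xv 1) ≠ 0)
    (hP1 : P = lv B0 b0x b0z (Xv 0) (Xv 2) +
      lv1 v1 m1 (Xv 0) * (lv1 bm mbm (Xv 2) * (Xv 1)⁻¹ + lv1 bp mbp (Xv 2) * Xv 1))
    (hP2 : P = lv C0 c0x c0y (Xv 0) (Xv 1) +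
      lv1 v2 m2 (Xv 0) * (lv1 cm mcm (Xv 1) * (Xv 2)⁻¹ + lv1 cp mcp (Xv 1) * Xv 2))
    (hnc : ¬∃ q : ℚ, lv1 bm mbm (Xv 2) / lv1 bp mbp (Xv 2) = algebraMap ℚ Fld q) :
    (∃ lam : ℚ, lam ≠ 0 ∧ lv1 v2 m2 (Xv 0) = algebraMap ℚ Fld lam * lv1 v1 m1 (Xv 0)) ∧
    ∃ (u v : Polynomial ℚ) (mu mv : ℕ) (t : MvPolynomial (Fin 2) ℚ) (mt nt : ℕ),
      P = lv1 u mu (Xv 0) + lv1 v mv (Xv 0) * lv t mt nt (Xv 1) (Xv 2) := by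
  have huni {p m i} : lv1 p m (Xv i) ∈ laurentAdjoin ℚ {Xv i} :=
    mem_laurentAdjoin_Xv_iff.2 ⟨p, m, rfl⟩
  have hbi {p m n i j} : lv p m n (Xv i) (Xv j) ∈ laurentAdjoin ℚ {Xv i, Xv j} :=
    mem_laurentAdjoin_Xv_pair_iff.2 ⟨p, m, n, rfl⟩
  rw [← isHadamard_laurentAdjoin_Xv_iff]
  exact stmt13_general algebraicIndependent_Xv hbi hbi huni huni huni huni huni huni hv1 hP1 hP2 hnc
end
end
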